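/- arXiv:1312.7800 — 3 statements merged into one kernel-verified Lean document; each statement's English description precedes it below -/
import Mathlib

section
/- The dimension of any LDB division algebra over a field K is a power of 2. -/
/-!
Fix `e ≠ 0`. Polarizing `x • (x ⋆ z) = q(x) z` shows that `x • (y ⋆ z) + y • (x ⋆ z)` is a scalar
multiple of `z`, so every operator `z ↦ x • (e ⋆ z)` is annihilated by a polynomial of degree two
over `K`. These operators form a linear space `E`, which acts irreducibly because it moves any
nonzero vector to any other vector.

It remains to see that a linear space `E` of quadratic operators can act irreducibly only in
dimension a power of two. Adjoin the generators of `E` one at a time, following a minimal invariant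
subspace `S`. When `v` is adjoined, polarizing the quadratic relations expresses `T v + v T`
linearly in `1`, `T`, `v` for each earlier operator `T`. Hence `S + v S` is invariant under the
larger family and `{x ∈ S | v x ∈ S}` under the smaller one, so by minimality of `S` the new
minimal subspace is either `S` itself or the direct sum of `S` and `v S`, of twice the dimension.
-/

open Module Submodule

section QuadraticElements

variable {K R : Type*} [CommRing K] [Ring R] [Algebra K R]

theorem mul_add_mul_mem_span_of_forall_sq_mem_span {E : Submodule K R}
    (hE : ∀ a ∈ E, a ^ 2 ∈ span K {1, a}) {a b : R} (ha : a ∈ E) (hb : b ∈ E) :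
    a * b + b * a ∈ span K {1, a, b} := by
  have h_one : (1 : R) ∈ span K {1, a, b} := mem_span_of_mem (by simp)
  have ha_mem : a ∈ span K {1, a, b} := mem_span_of_mem (by simp)
  have hb_mem : b ∈ span K {1, a, b} := mem_span_of_mem (by simp)
  have h_sq {c : R} (hc : c ∈ E) (hc_mem : c ∈ span K {1, a, b}) : c ^ 2 ∈ span K {1, a, b} :=
    span_le.2 (Set.pair_subset h_one hc_mem) (hE c hc)
  have h_polar : a * b + b * a = (a + b) ^ 2 - a ^ 2 - b ^ 2 := by noncomm_ring
  rw [h_polar]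
  exact sub_mem (sub_mem (h_sq (add_mem ha hb) (add_mem ha_mem hb_mem)) (h_sq ha ha_mem))
    (h_sq hb hb_mem)

end QuadraticElements

section InvariantSubspaces

variable {K V : Type*} [CommRing K] [AddCommGroup V] [Module K V]
  {S : Submodule K V} {T v : End K V}

theorem mem_compatibleMaps_sup_map_of_mul_mem {W : Submodule K V} (hT : T ∈ S.compatibleMaps W)
    (hTv : T * v ∈ S.compatibleMaps W) : T ∈ (S ⊔ S.map v).compatibleMaps W := by
  have hT_le : S ≤ W.comap T := hT
  have hTv_le : S.map v ≤ W.comap T := map_le_iff_le_comap.2 hTv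
  exact sup_le hT_le hTv_le

theorem mem_compatibleMaps_sup_map_of_sq_mem_span (hv : v ^ 2 ∈ span K {1, v}) :
    v ∈ (S ⊔ S.map v).compatibleMaps (S ⊔ S.map v) := by
  have h_one : 1 ∈ S.compatibleMaps (S ⊔ S.map v) := fun _ => mem_sup_left
  have hv_mem : v ∈ S.compatibleMaps (S ⊔ S.map v) := map_le_iff_le_comap.1 le_sup_right
  have hv_sq : v ^ 2 ∈ S.compatibleMaps (S ⊔ S.map v) :=
    span_le.2 (Set.pair_subset h_one hv_mem) hv
  rw [sq] at hv_sq
  exact mem_compatibleMaps_sup_map_of_mul_mem hv_mem hv_sq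

theorem mem_compatibleMaps_sup_map_of_anticommutator_mem_span (hT : T ∈ S.compatibleMaps S)
    (hTv : T * v + v * T ∈ span K {1, T, v}) :
    T ∈ (S ⊔ S.map v).compatibleMaps (S ⊔ S.map v) := by
  have h_one : 1 ∈ S.compatibleMaps (S ⊔ S.map v) := fun _ => mem_sup_left
  have hT_mem : T ∈ S.compatibleMaps (S ⊔ S.map v) := fun _ hx => mem_sup_left (hT hx)
  have hv_mem : v ∈ S.compatibleMaps (S ⊔ S.map v) := map_le_iff_le_comap.1 le_sup_right
  have hvT : v * T ∈ S.compatibleMaps (S ⊔ S.map v) := fun _ hx => hv_mem (hT hx)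
  have h_anti : T * v + v * T ∈ S.compatibleMaps (S ⊔ S.map v) :=
    span_le.2 (Set.insert_subset h_one (Set.pair_subset hT_mem hv_mem)) hTv
  have h_mul : T * v ∈ S.compatibleMaps (S ⊔ S.map v) := by
    simpa only [add_sub_cancel_right] using sub_mem h_anti hvT
  exact mem_compatibleMaps_sup_map_of_mul_mem hT_mem h_mul

theorem mem_compatibleMaps_inf_comap_of_anticommutator_mem_span (hT : T ∈ S.compatibleMaps S)
    (hTv : T * v + v * T ∈ span K {1, T, v}) :
    T ∈ (S ⊓ S.comap v).compatibleMaps (S ⊓ S.comap v) := by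
  have h_one : 1 ∈ (S ⊓ S.comap v).compatibleMaps S := fun _ hx => hx.1
  have hT_mem : T ∈ (S ⊓ S.comap v).compatibleMaps S := fun _ hx => hT hx.1
  have hv_mem : v ∈ (S ⊓ S.comap v).compatibleMaps S := fun _ hx => hx.2
  have hTv_mem : T * v ∈ (S ⊓ S.comap v).compatibleMaps S := fun _ hx => hT hx.2
  have h_anti : T * v + v * T ∈ (S ⊓ S.comap v).compatibleMaps S :=
    span_le.2 (Set.insert_subset h_one (Set.pair_subset hT_mem hv_mem)) hTv
  have hvT : v * T ∈ (S ⊓ S.comap v).compatibleMaps S := by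
    simpa only [add_sub_cancel_left] using sub_mem h_anti hTv_mem
  exact fun _ hx => ⟨hT_mem hx, hvT hx⟩

/-- `W` is minimal among the nonzero submodules stable under every operator in `E`; equivalently,
`W` is a simple module over the algebra generated by `E`. Stability of `U` is written
`E ≤ U.compatibleMaps U`. -/
def IsMinimalInvariant (E : Submodule K (End K V)) (W : Submodule K V) : Prop :=
  Minimal (fun U : Submodule K V => U ≠ ⊥ ∧ E ≤ U.compatibleMaps U) W

theorem exists_isMinimalInvariant_le [IsArtinian K V] {E : Submodule K (End K V)}
    {W : Submodule K V} (hW : W ≠ ⊥) (hEW : E ≤ W.compatibleMaps W) :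
    ∃ S ≤ W, IsMinimalInvariant E S :=
  exists_minimal_le_of_wellFoundedLT _ W ⟨hW, hEW⟩

theorem isMinimalInvariant_top_of_forall_exists_apply_eq [Nontrivial V]
    {E : Submodule K (End K V)} (hE : ∀ w ≠ 0, ∀ y, ∃ T ∈ E, T w = y) :
    IsMinimalInvariant E ⊤ := by
  refine ⟨⟨top_ne_bot, fun _ _ _ _ => mem_top⟩, fun W ⟨hW, hEW⟩ _ y _ => ?_⟩
  obtain ⟨w, hwW, hw⟩ := W.ne_bot_iff.1 hW
  obtain ⟨T, hT, rfl⟩ := hE w hw y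
  exact hEW hT hwW

theorem IsMinimalInvariant.map_le_or_inf_comap_eq_bot {E : Submodule K (End K V)}
    (hS : IsMinimalInvariant E S) (hv : ∀ T ∈ E, T * v + v * T ∈ span K {1, T, v}) :
    S.map v ≤ S ∨ S ⊓ S.comap v = ⊥ := by
  refine or_iff_not_imp_right.2 fun h_ne => map_le_iff_le_comap.2 (inf_eq_left.1 ?_)
  exact hS.eq_of_le ⟨h_ne, fun T hT =>
    mem_compatibleMaps_inf_comap_of_anticommutator_mem_span (hS.prop.2 hT) (hv T hT)⟩ inf_le_left

theorem IsMinimalInvariant.sup_map_eq {E : Submodule K (End K V)} {W : Submodule K V}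
    (hE : ∀ T ∈ span K {v} ⊔ E, T ^ 2 ∈ span K {1, T})
    (hW : IsMinimalInvariant (span K {v} ⊔ E) W) (hS : IsMinimalInvariant E S) (hSW : S ≤ W) :
    S ⊔ S.map v = W := by
  have hv : v ∈ span K {v} ⊔ E := mem_sup_left (mem_span_singleton_self v)
  have h_ne : S ⊔ S.map v ≠ ⊥ := ne_bot_of_le_ne_bot hS.prop.1 le_sup_left
  have h_le : S ⊔ S.map v ≤ W :=
    sup_le hSW (map_le_iff_le_comap.2 fun _ hx => hW.prop.2 hv (hSW hx))
  have h_inv : span K {v} ⊔ E ≤ (S ⊔ S.map v).compatibleMaps (S ⊔ S.map v) := by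
    rw [sup_le_iff, span_singleton_le_iff_mem]
    refine ⟨mem_compatibleMaps_sup_map_of_sq_mem_span (hE v hv), fun T hT => ?_⟩
    exact mem_compatibleMaps_sup_map_of_anticommutator_mem_span (hS.prop.2 hT)
      (mul_add_mul_mem_span_of_forall_sq_mem_span hE (mem_sup_right hT) hv)
  exact hW.eq_of_le ⟨h_ne, h_inv⟩ h_le

end InvariantSubspaces

section Dimension

variable {K V : Type*} [Field K] [AddCommGroup V] [Module K V]

theorem finrank_sup_map_of_inf_comap_eq_bot {S : Submodule K V} [FiniteDimensional K S]
    {v : End K V} (h : S ⊓ S.comap v = ⊥) : finrank K ↥(S ⊔ S.map v) = 2 * finrank K S := by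
  have h_zero {x : V} (hx : x ∈ S) (hvx : v x ∈ S) : x = 0 :=
    (Submodule.eq_bot_iff _).1 h x ⟨hx, hvx⟩
  have h_inj : Function.Injective (v.domRestrict S) :=
    (injective_iff_map_eq_zero _).2 fun x (hx : v x = 0) =>
      Subtype.ext (h_zero x.2 (hx ▸ S.zero_mem))
  have h_map : finrank K (S.map v) = finrank K S := by
    rw [← LinearMap.range_domRestrict, LinearMap.finrank_range_of_inj h_inj]
  have h_disj : S ⊓ S.map v = ⊥ := by
    rw [eq_bot_iff]
    rintro _ ⟨hvx, x, hx, rfl⟩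
    rw [h_zero hx hvx, map_zero]
    exact zero_mem _
  have h_add := finrank_sup_add_finrank_inf_eq S (S.map v)
  rw [h_disj, finrank_bot, h_map] at h_add
  omega

theorem IsMinimalInvariant.finrank_eq_or_eq_two_mul {E : Submodule K (End K V)}
    {S W : Submodule K V} [FiniteDimensional K S] {v : End K V}
    (hE : ∀ T ∈ span K {v} ⊔ E, T ^ 2 ∈ span K {1, T})
    (hW : IsMinimalInvariant (span K {v} ⊔ E) W) (hS : IsMinimalInvariant E S) (hSW : S ≤ W) :
    finrank K W = finrank K S ∨ finrank K W = 2 * finrank K S := by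
  have h_anti : ∀ T ∈ E, T * v + v * T ∈ span K {1, T, v} := fun T hT =>
    mul_add_mul_mem_span_of_forall_sq_mem_span hE (mem_sup_right hT)
      (mem_sup_left (mem_span_singleton_self v))
  rw [← hW.sup_map_eq hE hS hSW]
  rcases hS.map_le_or_inf_comap_eq_bot h_anti with h_le | h_bot
  · left
    rw [sup_eq_left.2 h_le]
  · right
    exact finrank_sup_map_of_inf_comap_eq_bot h_bot

theorem IsMinimalInvariant.finrank_eq_one {W : Submodule K V}
    (hW : IsMinimalInvariant (⊥ : Submodule K (End K V)) W) : finrank K W = 1 := by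
  obtain ⟨w, hwW, hw⟩ := W.ne_bot_iff.1 hW.prop.1
  have h_span : span K {w} = W :=
    hW.eq_of_le ⟨by simpa using hw, bot_le⟩ ((span_singleton_le_iff_mem w W).2 hwW)
  rw [← h_span, finrank_span_singleton hw]

theorem IsMinimalInvariant.exists_finrank_eq_two_pow [FiniteDimensional K V]
    {E : Submodule K (End K V)} (hE : ∀ T ∈ E, T ^ 2 ∈ span K {1, T}) {W : Submodule K V}
    (hW : IsMinimalInvariant E W) : ∃ k : ℕ, finrank K W = 2 ^ k := by
  classical
  obtain ⟨s, rfl⟩ := IsNoetherian.noetherian E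
  induction s using Finset.induction_on generalizing W with
  | empty =>
    rw [Finset.coe_empty, span_empty] at hW
    exact ⟨0, hW.finrank_eq_one⟩
  | insert v s _ ih =>
    rw [Finset.coe_insert, span_insert] at hE hW
    obtain ⟨S, hSW, hS⟩ := exists_isMinimalInvariant_le hW.prop.1 (le_sup_right.trans hW.prop.2)
    obtain ⟨k, hk⟩ := ih (fun T hT => hE T (mem_sup_right hT)) hS
    rcases hW.finrank_eq_or_eq_two_mul hE hS hSW with h_eq | h_double
    · exact ⟨k, h_eq.trans hk⟩
    · exact ⟨k + 1, by rw [h_double, hk, pow_succ']⟩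

end Dimension

section BilinearMaps

variable {K X Y Z : Type*} [CommRing K] [AddCommGroup X] [Module K X] [AddCommGroup Y] [Module K Y]
  [AddCommGroup Z] [Module K Z] {star : X →ₗ[K] Y →ₗ[K] Z} {bull : X →ₗ[K] Z →ₗ[K] Y} {q : X → K}

theorem bull_star_add_bull_star_eq_polar_smul (h : ∀ x y, bull x (star x y) = q x • y)
    (x x' : X) (y : Y) :
    bull x (star x' y) + bull x' (star x y) = QuadraticMap.polar q x x' • y := by
  have h_add := h (x + x') y
  simp only [map_add, LinearMap.add_apply, h] at h_add
  simp only [QuadraticMap.polar, sub_smul, ← h_add]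
  abel

theorem sq_bull_comp_star_eq_polar_smul_sub (hsb : ∀ x z, star x (bull x z) = q x • z)
    (hbs : ∀ x y, bull x (star x y) = q x • y) (x e : X) :
    (bull x ∘ₗ star e) ^ 2 =
      QuadraticMap.polar q x e • (bull x ∘ₗ star e) - (q x * q e) • (1 : End K Y) := by
  ext y
  have h_polar := bull_star_add_bull_star_eq_polar_smul hbs x e (bull x (star e y))
  rw [hsb, map_smul, hbs, smul_smul] at h_polar
  exact eq_sub_of_add_eq h_polar

end BilinearMaps

theorem surjective_of_forall_apply_ne_zero {K A : Type*} [DivisionRing K] [AddCommGroup A]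
    [Module K A] [FiniteDimensional K A] {f : A →ₗ[K] A} (hf : ∀ x ≠ 0, f x ≠ 0) :
    Function.Surjective f :=
  LinearMap.surjective_of_injective <|
    (injective_iff_map_eq_zero f).2 fun x hx => not_imp_not.1 (hf x) hx

theorem stmt_8 (K A : Type*) [Field K] [AddCommGroup A] [Module K A]
    [FiniteDimensional K A] [Nontrivial A]
    (star bull : A →ₗ[K] A →ₗ[K] A)
    (hstar : ∀ x y : A, x ≠ 0 → y ≠ 0 → star x y ≠ 0)
    (hbull : ∀ x y : A, x ≠ 0 → y ≠ 0 → bull x y ≠ 0)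
    (q : QuadraticForm K A)
    (hq : ∀ x y : A, star x (bull x y) = q x • y) :
    ∃ k : ℕ, Module.finrank K A = 2 ^ k := by
  obtain ⟨e, he⟩ := exists_ne (0 : A)
  have hq' : ∀ x y, bull x (star x y) = q x • y := by
    intro x y
    by_cases hx : x = 0
    · simp [hx]
    · obtain ⟨z, rfl⟩ := surjective_of_forall_apply_ne_zero (hbull x · hx) y
      rw [hq, map_smul]
  let E : Submodule K (End K A) := LinearMap.range (LinearMap.lcomp K A (star e) ∘ₗ bull)
  have hE_sq : ∀ T ∈ E, T ^ 2 ∈ span K {1, T} := by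
    rintro _ ⟨x, rfl⟩
    refine mem_span_pair.2 ⟨-(q x * q e), QuadraticMap.polar q x e, ?_⟩
    rw [neg_smul, neg_add_eq_sub]
    exact (sq_bull_comp_star_eq_polar_smul_sub hq hq' x e).symm
  have hE_trans : ∀ w ≠ 0, ∀ y, ∃ T ∈ E, T w = y := by
    intro w hw y
    obtain ⟨x, hx⟩ := surjective_of_forall_apply_ne_zero (f := bull.flip (star e w))
      (fun z hz => hbull z _ hz (hstar e w he hw)) y
    exact ⟨_, ⟨x, rfl⟩, hx⟩
  simpa only [finrank_top] using
    (isMinimalInvariant_top_of_forall_exists_apply_eq hE_trans).exists_finrank_eq_two_pow hE_sq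
end

section
/- Every non-degenerate LDB division algebra (one whose attached quadratic form is non-degenerate) has dimension 1, 2, 4, or 8. -/
/-!
The operators of the two multiplications satisfy `star x ∘ bull x = q x`, and polarizing this
identity at some `e` with `q e ≠ 0` yields `bull x ∘ star x = q x` as well. Hence, with `n = dim A`,
the operator `(a, b) ↦ (star x b, bull x a)` on `A × A` squares to `q x`, so `A × A` is a module
over the Clifford algebra of `q`. Over an algebraic closure `q` splits off hyperbolic planes, each
of which halves the module, and so `2 ^ ⌊n / 2⌋` divides `2 * n`; this settles even `n`.

If `n` is odd, the characteristic is not two because alternating nondegenerate forms have even rank.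
On the orthogonal complement of `e`, the operators `star e ∘ bull x` on `A` itself square to
`-q e * q x`, so `2 ^ ((n - 1) / 2)` divides the odd number `n`.
-/

open Module QuadraticMap
open LinearMap (BilinForm)
open scoped TensorProduct

section HyperbolicPair

variable {K V : Type*} [Field K] [AddCommGroup V] [Module K V] {B : BilinForm K V}
  {e f : V}

/-- The vectors `e` and `f` form a hyperbolic pair for the bilinear form `B`: they span a
hyperbolic plane, in which both are isotropic. The value `B f e` is left free, so that the notion
covers symmetric and alternating forms. -/
structure IsHyperbolicPair (B : BilinForm K V) (e f : V) : Prop where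
  apply_left_self : B e e = 0
  apply_right_self : B f f = 0
  apply_left_right : B e f = 1

namespace IsHyperbolicPair

lemma apply_right_left_ne_zero (h : IsHyperbolicPair B e f) (hB : B.IsRefl) : B f e ≠ 0 :=
  fun hfe ↦ one_ne_zero (h.apply_left_right.symm.trans (hB f e hfe))

lemma linearIndependent (h : IsHyperbolicPair B e f) (hB : B.IsRefl) :
    LinearIndependent K ![e, f] := by
  refine LinearIndependent.pair_iff.2 fun a b hab ↦ ⟨?_, ?_⟩
  · have : B f (a • e + b • f) = 0 := by rw [hab, map_zero]
    simpa [h.apply_right_self, h.apply_right_left_ne_zero hB] using this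
  · have : B e (a • e + b • f) = 0 := by rw [hab, map_zero]
    simpa [h.apply_left_self, h.apply_left_right] using this

lemma disjoint_orthogonal (h : IsHyperbolicPair B e f) (hB : B.IsRefl) :
    Disjoint (Submodule.span K {e, f}) (B.orthogonal (Submodule.span K {e, f})) := by
  rw [Submodule.disjoint_def]
  intro x hx hx'
  obtain ⟨a, b, rfl⟩ := Submodule.mem_span_pair.1 hx
  have ha := hx' f (Submodule.mem_span_of_mem (by simp))
  have hb := hx' e (Submodule.mem_span_of_mem (by simp))
  simp only [map_add, map_smul, smul_eq_mul, h.apply_right_self, mul_zero, add_zero, mul_eq_zero,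
    h.apply_right_left_ne_zero hB, or_false] at ha
  simp only [map_add, map_smul, smul_eq_mul, h.apply_left_self, mul_zero, h.apply_left_right,
    mul_one, zero_add] at hb
  simp [ha, hb]

variable [FiniteDimensional K V]

lemma finrank_orthogonal_add_two (h : IsHyperbolicPair B e f) (hB : B.IsRefl)
    (hnd : B.Nondegenerate) :
    finrank K (B.orthogonal (Submodule.span K {e, f})) + 2 = finrank K V := by
  have hspan : finrank K (Submodule.span K {e, f}) = 2 := by
    rw [← Matrix.range_cons_cons_empty e f ![], finrank_span_eq_card (h.linearIndependent hB),
      Fintype.card_fin]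
  have := Submodule.finrank_le (Submodule.span K {e, f})
  rw [BilinForm.finrank_orthogonal hnd]
  lia

lemma nondegenerate_restrict_orthogonal (h : IsHyperbolicPair B e f) (hB : B.IsRefl)
    (hnd : B.Nondegenerate) :
    (B.restrict (B.orthogonal (Submodule.span K {e, f}))).Nondegenerate := by
  apply B.nondegenerate_restrict_of_disjoint_orthogonal hB
  rw [BilinForm.orthogonal_orthogonal hnd hB]
  exact (h.disjoint_orthogonal hB).symm

end IsHyperbolicPair

lemma exists_apply_eq_one_of_nondegenerate (hB : B.Nondegenerate) (he : e ≠ 0) :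
    ∃ f, B e f = 1 := by
  obtain ⟨y, hy⟩ : ∃ y, B e y ≠ 0 := by
    by_contra! h
    exact he (hB.1 e h)
  exact ⟨(B e y)⁻¹ • y, by simp [hy]⟩

lemma even_finrank_of_isAlt_of_nondegenerate [FiniteDimensional K V] (hB : B.IsAlt)
    (hnd : B.Nondegenerate) : Even (finrank K V) := by
  induction hn : finrank K V using Nat.strong_induction_on generalizing V with
  | _ n ih =>
  rcases n.eq_zero_or_pos with rfl | hpos
  · exact Even.zero
  have : Nontrivial V := nontrivial_of_finrank_pos (R := K) (hn ▸ hpos)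
  obtain ⟨e, he⟩ := exists_ne (0 : V)
  obtain ⟨f, hef⟩ := exists_apply_eq_one_of_nondegenerate hnd he
  have h : IsHyperbolicPair B e f := ⟨hB e, hB f, hef⟩
  have hdim := h.finrank_orthogonal_add_two hB.isRefl hnd
  have heven := ih _ (by lia) (B := B.restrict (B.orthogonal (Submodule.span K {e, f})))
    (fun x ↦ hB x) (h.nondegenerate_restrict_orthogonal hB.isRefl hnd) rfl
  rw [← hn, ← hdim]
  exact heven.add even_two

end HyperbolicPair

section QuadraticForm

variable {K V : Type*} [Field K] [AddCommGroup V] [Module K V] {q : QuadraticForm K V}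

lemma polarBilin_isRefl (q : QuadraticForm K V) : q.polarBilin.IsRefl :=
  fun x y h ↦ (polar_comm q y x).trans h

lemma nondegenerate_polarBilin_smul (hq : q.polarBilin.Nondegenerate) {c : K} (hc : c ≠ 0) :
    (c • q).polarBilin.Nondegenerate := by
  have hsmul (x y : V) : (c • q).polarBilin x y = c • q.polarBilin x y := polar_smul q c x y
  refine ⟨fun x hx ↦ hq.1 x fun y ↦ ?_, fun y hy ↦ hq.2 y fun x ↦ ?_⟩
  · exact (smul_eq_zero_iff_right hc).1 ((hsmul x y).symm.trans (hx y))
  · exact (smul_eq_zero_iff_right hc).1 ((hsmul x y).symm.trans (hy x))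

lemma exists_apply_ne_zero_of_nondegenerate [Nontrivial V] (hq : q.polarBilin.Nondegenerate) :
    ∃ e, q e ≠ 0 := by
  obtain ⟨e, he⟩ := exists_ne (0 : V)
  by_contra! h
  exact he (hq.1 e fun y ↦ by simp [polar, h])

lemma two_ne_zero_of_odd_finrank [FiniteDimensional K V] (hq : q.polarBilin.Nondegenerate)
    (hodd : Odd (finrank K V)) : (2 : K) ≠ 0 := by
  intro h2
  have hAlt : q.polarBilin.IsAlt := fun x ↦ by
    rw [polarBilin_apply_apply, polar_self, ← Nat.cast_smul_eq_nsmul K, Nat.cast_two, h2, zero_smul]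
  exact Nat.not_even_iff_odd.2 hodd (even_finrank_of_isAlt_of_nondegenerate hAlt hq)

lemma exists_polar_eq_one_of_apply_eq_zero (hq : q.polarBilin.Nondegenerate) {e : V} (he : e ≠ 0)
    (hqe : q e = 0) : ∃ f, q f = 0 ∧ polar q e f = 1 := by
  obtain ⟨g, hg⟩ := exists_apply_eq_one_of_nondegenerate hq he
  rw [polarBilin_apply_apply] at hg
  refine ⟨g - q g • e, ?_, ?_⟩
  · rw [sub_eq_add_neg, ← neg_smul, QuadraticMap.map_add q, QuadraticMap.map_smul, polar_smul_right,
      polar_comm, hqe, hg]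
    simp
  · rw [polar_sub_right, polar_smul_right, hg, polar_self, hqe]
    simp

lemma isHyperbolicPair_polarBilin {e f : V} (he : q e = 0) (hf : q f = 0) (hef : polar q e f = 1) :
    IsHyperbolicPair q.polarBilin e f := by
  constructor <;> simp [polar_self, *]

lemma exists_ne_zero_apply_eq_zero [IsAlgClosed K] (q : QuadraticForm K V)
    (h : 1 < finrank K V) : ∃ e ≠ 0, q e = 0 := by
  have : Nontrivial V := nontrivial_of_finrank_pos (R := K) (by lia)
  obtain ⟨x, hx⟩ := exists_ne (0 : V)
  obtain ⟨y, hxy⟩ := exists_linearIndependent_pair_of_one_lt_finrank h hx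
  by_cases hy : q y = 0
  · exact ⟨y, hxy.ne_zero 1, hy⟩
  obtain ⟨t, ht⟩ := IsAlgClosed.exists_root
    (Polynomial.C (q y) * Polynomial.X ^ 2 + Polynomial.C (polar q x y) * Polynomial.X
      + Polynomial.C (q x)) (by rw [Polynomial.degree_quadratic hy]; norm_num)
  refine ⟨x + t • y, fun h0 ↦ ?_, ?_⟩
  · exact one_ne_zero (LinearIndependent.pair_iff.1 hxy 1 t (by simpa using h0)).1
  · simp only [Polynomial.IsRoot, Polynomial.eval_add, Polynomial.eval_mul, Polynomial.eval_C,
      Polynomial.eval_pow, Polynomial.eval_X] at ht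
    rw [QuadraticMap.map_add q, QuadraticMap.map_smul, polar_smul_right, smul_eq_mul, smul_eq_mul]
    linear_combination ht

end QuadraticForm

lemma nondegenerate_baseChange {K V : Type*} (L : Type*) [Field K] [Field L] [Algebra K L]
    [AddCommGroup V] [Module K V] [FiniteDimensional K V] {B : BilinForm K V}
    (hB : B.Nondegenerate) : (B.baseChange L).Nondegenerate := by
  classical
  let b := finBasis K V
  have hM : LinearMap.BilinForm.toMatrix (b.baseChange L) (B.baseChange L)
      = (LinearMap.BilinForm.toMatrix b B).map (algebraMap K L) := by
    ext i j
    simp [LinearMap.BilinForm.toMatrix_apply, Algebra.algebraMap_eq_smul_one]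
  rw [LinearMap.BilinForm.nondegenerate_iff_det_ne_zero (b.baseChange L), hM,
    ← RingHom.mapMatrix_apply, ← RingHom.map_det]
  exact (map_ne_zero _).2 ((LinearMap.BilinForm.nondegenerate_iff_det_ne_zero b).1 hB)

section LinearFactorization

/-- A pair of linear maps `s`, `t` from a quadratic module to an algebra is a linear factorization
of the quadratic form `q` if `s x * t x` is the scalar `q x`. The two multiplications of an LDB
division algebra on `A` form such a pair in `Module.End K A`. -/
def IsLinearFactorization {R M A : Type*} [CommRing R] [AddCommGroup M] [Module R M] [Ring A]
    [Algebra R A] (q : QuadraticForm R M) (s t : M →ₗ[R] A) : Prop :=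
  ∀ x, s x * t x = algebraMap R A (q x)

/-- A linear map `f` from a quadratic module to an algebra is a Clifford map if `f x` squares to
the scalar `q x`, that is, if `f` extends to the Clifford algebra of `q`. -/
abbrev IsCliffordMap {R M A : Type*} [CommRing R] [AddCommGroup M] [Module R M] [Ring A]
    [Algebra R A] (q : QuadraticForm R M) (f : M →ₗ[R] A) : Prop :=
  IsLinearFactorization q f f

namespace IsLinearFactorization

lemma mul_add_mul_swap {R M A : Type*} [CommRing R] [AddCommGroup M] [Module R M] [Ring A]
    [Algebra R A] {q : QuadraticForm R M} {s t : M →ₗ[R] A} (h : IsLinearFactorization q s t)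
    (x y : M) : s x * t y + s y * t x = algebraMap R A (polar q x y) := by
  simp only [polar, map_sub, ← h _, map_add, add_mul, mul_add]
  abel

variable {K V A : Type*} [Field K] [AddCommGroup V] [Module K V] [Ring A] [Algebra K A]
  {q : QuadraticForm K V} {s t : V →ₗ[K] A}

lemma apply_mul_apply_comm_of_ne_zero [IsDedekindFiniteMonoid A] (h : IsLinearFactorization q s t)
    {e : V} (he : q e ≠ 0) : t e * s e = algebraMap K A (q e) := by
  have hinv : s e * ((q e)⁻¹ • t e) = 1 := by
    rw [mul_smul_comm, h e, inv_smul_eq_iff₀ he, Algebra.algebraMap_eq_smul_one]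
  rw [mul_eq_one_comm, smul_mul_assoc, inv_smul_eq_iff₀ he] at hinv
  rw [hinv, Algebra.algebraMap_eq_smul_one]

lemma symm [IsDedekindFiniteMonoid A] (h : IsLinearFactorization q s t) {e : V} (he : q e ≠ 0) :
    IsLinearFactorization q t s := by
  intro x
  have hunit : IsUnit (s e * t e) := h e ▸ he.isUnit.map (algebraMap K A)
  have hs : IsUnit (s e) := isUnit_of_mul_isUnit_left hunit
  have ht : IsUnit (t e) := isUnit_of_mul_isUnit_right hunit
  have hpol : s e * t x = algebraMap K A (polar q e x) - s x * t e :=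
    eq_sub_of_add_eq (h.mul_add_mul_swap e x)
  refine hs.mul_left_cancel (ht.mul_right_cancel ?_)
  calc s e * (t x * s x) * t e
      = s e * t x * (s x * t e) := by noncomm_ring
    _ = s x * t e * (s e * t x) := by
        rw [hpol, sub_mul, mul_sub, Algebra.commutes]
    _ = s x * (t e * s e) * t x := by noncomm_ring
    _ = s x * t x * algebraMap K A (q e) := by
        rw [h.apply_mul_apply_comm_of_ne_zero he, mul_assoc, Algebra.commutes, mul_assoc]
    _ = s e * algebraMap K A (q x) * t e := by
        rw [h x, ← h e, ← mul_assoc, Algebra.commutes]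

lemma isCliffordMap_mulLeft_comp (h : IsLinearFactorization q s t) {e : V} {U : Submodule K V}
    (hU : ∀ x ∈ U, polar q e x = 0) (hts : IsLinearFactorization q t s) :
    IsCliffordMap (-q e • q.comp U.subtype) (LinearMap.mulLeft K (s e) ∘ₗ t ∘ₗ U.subtype) := by
  intro x
  have hpol : t x * s e = -(t e * s x) := by
    rw [eq_neg_iff_add_eq_zero, hts.mul_add_mul_swap, polar_comm, hU x x.2, map_zero]
  calc s e * t x * (s e * t x)
      = s e * (t x * s e) * t x := by noncomm_ring
    _ = -(s e * t e * (s x * t x)) := by rw [hpol]; noncomm_ring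
    _ = algebraMap K A (-q e * q x) := by rw [h e, h x, ← map_mul, ← map_neg, neg_mul]

lemma exists_isCliffordMap_prod {W : Type*} [AddCommGroup W] [Module K W]
    {s t : V →ₗ[K] Module.End K W} (h : IsLinearFactorization q s t)
    (hts : IsLinearFactorization q t s) :
    ∃ f : V →ₗ[K] Module.End K (W × W), IsCliffordMap q f := by
  let f : V →ₗ[K] Module.End K (W × W) :=
    { toFun x := (s x ∘ₗ LinearMap.snd K W W).prod (t x ∘ₗ LinearMap.fst K W W)
      map_add' x y := by ext <;> simp
      map_smul' c x := by ext <;> simp }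
  refine ⟨f, fun x ↦ LinearMap.ext fun w ↦ Prod.ext ?_ ?_⟩
  · exact congr($(h x) w.1)
  · exact congr($(hts x) w.2)

end IsLinearFactorization

namespace IsCliffordMap

lemma baseChange {R M W : Type*} (S : Type*) [CommRing R] [CommRing S] [Algebra R S]
    [AddCommGroup M] [Module R M] [AddCommGroup W] [Module R W] {B : BilinForm R M}
    {f : M →ₗ[R] Module.End R W} (hf : IsCliffordMap B.toQuadraticMap f) :
    IsCliffordMap (A := Module.End S (S ⊗[R] W)) (B.baseChange S).toQuadraticMap
      (((End.baseChangeHom R S W).toLinearMap ∘ₗ f).liftBaseChange S) := by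
  set F := ((End.baseChangeHom R S W).toLinearMap ∘ₗ f).liftBaseChange S
  -- Two quadratic maps on `S ⊗[R] M` agree as soon as they agree on the vectors `1 ⊗ₜ x`.
  let square : QuadraticMap S (S ⊗[R] M) (Module.End S (S ⊗[R] W)) :=
    LinearMap.BilinMap.toQuadraticMap ((LinearMap.mul S _).compl₁₂ F F)
  have h : square
      = (Algebra.linearMap S _).compQuadraticMap (B.baseChange S).toQuadraticMap := by
    refine baseChange_ext (R := R) (A := S) (M₂ := M) (N₁ := Module.End S (S ⊗[R] W)) fun x ↦ ?_
    have := congrArg (End.baseChangeHom R S W) (hf x)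
    rw [map_mul, AlgHom.commutes, Algebra.algebraMap_eq_smul_one] at this
    simpa [F, square] using this
  exact fun x ↦ congr($h x)

variable {K V W : Type*} [Field K] [AddCommGroup V] [Module K V] [AddCommGroup W] [Module K W]
  {q : QuadraticForm K V} {f : V →ₗ[K] Module.End K W}

lemma range_eq_ker (hf : IsCliffordMap q f) {u v : V} (hu : q u = 0) (huv : polar q u v = 1) :
    LinearMap.range (f u) = LinearMap.ker (f u) := by
  apply le_antisymm
  · rintro _ ⟨w, rfl⟩
    simpa [hu] using congr($(hf u) w)
  · intro w hw
    have h := congr($(hf.mul_add_mul_swap u v) w)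
    exact ⟨f v w, by simpa [huv, LinearMap.mem_ker.1 hw] using h⟩

lemma two_mul_finrank_ker [FiniteDimensional K W] (hf : IsCliffordMap q f) {u v : V} (hu : q u = 0)
    (huv : polar q u v = 1) : 2 * finrank K (LinearMap.ker (f u)) = finrank K W := by
  rw [← (f u).finrank_range_add_finrank_ker, hf.range_eq_ker hu huv, two_mul]

lemma exists_restrict_ker (hf : IsCliffordMap q f) {u : V} {U : Submodule K V}
    (hU : ∀ x ∈ U, polar q u x = 0) :
    ∃ g : U →ₗ[K] Module.End K (LinearMap.ker (f u)), IsCliffordMap (q.comp U.subtype) g := by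
  have hmaps (x : U) (w : W) (hw : w ∈ LinearMap.ker (f u)) : f x w ∈ LinearMap.ker (f u) := by
    have h := congr($(hf.mul_add_mul_swap u x) w)
    simpa [hU x x.2, LinearMap.mem_ker.1 hw] using h
  let g : U →ₗ[K] Module.End K (LinearMap.ker (f u)) :=
    { toFun x := (f x).restrict (hmaps x)
      map_add' x y := by ext w; simp
      map_smul' c x := by ext w; simp }
  refine ⟨g, fun x ↦ ?_⟩
  ext w
  simpa [g] using congr($(hf x) w)

variable [FiniteDimensional K V] [FiniteDimensional K W]

lemma two_pow_dvd_finrank_of_isAlgClosed [IsAlgClosed K] (hf : IsCliffordMap q f)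
    (hq : q.polarBilin.Nondegenerate) : 2 ^ (finrank K V / 2) ∣ finrank K W := by
  induction hn : finrank K V using Nat.strong_induction_on generalizing V W with
  | _ n ih =>
  rcases Nat.lt_or_ge n 2 with hlt | hge
  · simp [Nat.div_eq_of_lt hlt]
  obtain ⟨u, hu0, hu⟩ := exists_ne_zero_apply_eq_zero q (by lia)
  obtain ⟨v, hv, huv⟩ := exists_polar_eq_one_of_apply_eq_zero hq hu0 hu
  have hpair := isHyperbolicPair_polarBilin hu hv huv
  let U := BilinForm.orthogonal q.polarBilin (Submodule.span K {u, v})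
  have hdim : finrank K U + 2 = finrank K V :=
    hpair.finrank_orthogonal_add_two (polarBilin_isRefl q) hq
  obtain ⟨g, hg⟩ := hf.exists_restrict_ker (U := U) fun x hx ↦
    hx u (Submodule.mem_span_of_mem (by simp))
  have hU : (q.comp U.subtype).polarBilin.Nondegenerate := by
    rw [polarBilin_comp]
    exact hpair.nondegenerate_restrict_orthogonal (polarBilin_isRefl q) hq
  have hdvd := ih (finrank K U) (by lia) hg hU rfl
  rw [← hf.two_mul_finrank_ker hu huv, ← hn, ← hdim, Nat.add_div_right _ two_pos, pow_succ']
  exact Nat.mul_dvd_mul_left 2 hdvd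

theorem two_pow_dvd_finrank (hf : IsCliffordMap q f) (hq : q.polarBilin.Nondegenerate) :
    2 ^ (finrank K V / 2) ∣ finrank K W := by
  obtain ⟨B : BilinForm K V, rfl⟩ := LinearMap.BilinMap.toQuadraticMap_surjective q
  let L := AlgebraicClosure K
  have hnd : (B.baseChange L).toQuadraticMap.polarBilin.Nondegenerate := by
    have h : (B.baseChange L).toQuadraticMap.polarBilin
        = BilinForm.baseChange L B.toQuadraticMap.polarBilin := by
      ext x y
      simp [LinearMap.BilinMap.polar_toQuadraticMap, add_smul]
    rw [h]
    exact nondegenerate_baseChange L hq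
  simpa using (hf.baseChange L).two_pow_dvd_finrank_of_isAlgClosed hnd

end IsCliffordMap

end LinearFactorization

section Dimension

variable {K V W : Type*} [Field K] [AddCommGroup V] [Module K V] [FiniteDimensional K V]
  [AddCommGroup W] [Module K W] [FiniteDimensional K W] {q : QuadraticForm K V}

namespace IsLinearFactorization

variable {s t : V →ₗ[K] Module.End K W}

theorem two_pow_dvd_two_mul_finrank (h : IsLinearFactorization q s t)
    (hq : q.polarBilin.Nondegenerate) : 2 ^ (finrank K V / 2) ∣ 2 * finrank K W := by
  rcases subsingleton_or_nontrivial V with _ | _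
  · simp [finrank_zero_of_subsingleton]
  obtain ⟨e, he⟩ := exists_apply_ne_zero_of_nondegenerate hq
  obtain ⟨f, hf⟩ := h.exists_isCliffordMap_prod (h.symm he)
  simpa [two_mul] using hf.two_pow_dvd_finrank hq

theorem two_pow_dvd_finrank_of_odd (h : IsLinearFactorization q s t)
    (hq : q.polarBilin.Nondegenerate) (hodd : Odd (finrank K V)) :
    2 ^ (finrank K V / 2) ∣ finrank K W := by
  have : Nontrivial V := nontrivial_of_finrank_pos (R := K) hodd.pos
  obtain ⟨e, he⟩ := exists_apply_ne_zero_of_nondegenerate hq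
  have hee : q.polarBilin e e ≠ 0 := by
    rw [polarBilin_apply_apply, polar_self, ← Nat.cast_smul_eq_nsmul K, Nat.cast_two]
    exact smul_ne_zero (two_ne_zero_of_odd_finrank hq hodd) he
  let U := BilinForm.orthogonal q.polarBilin (K ∙ e)
  have hU : ∀ x ∈ U, polar q e x = 0 := fun x hx ↦ hx e (Submodule.mem_span_singleton_self e)
  have hndU : (q.comp U.subtype).polarBilin.Nondegenerate := by
    rw [polarBilin_comp]
    exact BilinForm.restrict_nondegenerate_orthogonal_spanSingleton _ hq (polarBilin_isRefl q) hee
  have hdim : finrank K U = finrank K V - 1 := by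
    rw [BilinForm.finrank_orthogonal hq, finrank_span_singleton (by rintro rfl; simp at he)]
  have hdvd := (h.isCliffordMap_mulLeft_comp hU (h.symm he)).two_pow_dvd_finrank
    (nondegenerate_polarBilin_smul hndU (neg_ne_zero.2 he))
  obtain ⟨m, hm⟩ := hodd
  rwa [hdim, show (finrank K V - 1) / 2 = finrank K V / 2 by lia] at hdvd

end IsLinearFactorization

end Dimension

lemma eq_one_of_two_pow_half_dvd_of_odd {n : ℕ} (hodd : Odd n) (h : 2 ^ (n / 2) ∣ n) : n = 1 := by
  have hcop : Nat.Coprime (2 ^ (n / 2)) n := (Nat.coprime_two_left.2 hodd).pow_left _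
  have hpow : 2 ^ (n / 2) = 1 := hcop.eq_one_of_dvd h
  have hhalf : n / 2 = 0 := by simpa using hpow
  obtain ⟨m, rfl⟩ := hodd
  lia

lemma four_mul_lt_two_pow {m : ℕ} (hm : 5 ≤ m) : 4 * m < 2 ^ m := by
  induction m, hm using Nat.le_induction with
  | base => norm_num
  | succ k hk ih => lia

lemma eq_two_or_four_or_eight_of_two_pow_half_dvd_two_mul {n : ℕ} (hpos : 0 < n) (heven : Even n)
    (h : 2 ^ (n / 2) ∣ 2 * n) : n = 2 ∨ n = 4 ∨ n = 8 := by
  obtain ⟨m, rfl⟩ := even_iff_exists_two_mul.1 heven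
  rw [Nat.mul_div_cancel_left m two_pos] at h
  have hlt : m < 5 := by
    by_contra! hm
    have := four_mul_lt_two_pow hm
    exact absurd (Nat.le_of_dvd (by lia) h) (by lia)
  interval_cases m <;> simp_all

theorem stmt_10_general {K A : Type*} [Field K] [AddCommGroup A] [Module K A]
    [FiniteDimensional K A] [Nontrivial A] (star bull : A →ₗ[K] A →ₗ[K] A) (q : QuadraticForm K A)
    (hq : ∀ x y, star x (bull x y) = q x • y) (hnd : q.polarBilin.Nondegenerate) :
    finrank K A = 1 ∨ finrank K A = 2 ∨ finrank K A = 4 ∨ finrank K A = 8 := by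
  have h : IsLinearFactorization (A := Module.End K A) q star bull :=
    fun x ↦ LinearMap.ext fun y ↦ by simpa using hq x y
  rcases Nat.even_or_odd (finrank K A) with heven | hodd
  · exact .inr (eq_two_or_four_or_eight_of_two_pow_half_dvd_two_mul finrank_pos heven
      (h.two_pow_dvd_two_mul_finrank hnd))
  · exact .inl (eq_one_of_two_pow_half_dvd_of_odd hodd (h.two_pow_dvd_finrank_of_odd hnd hodd))

theorem stmt_10 (K A : Type*) [Field K] [AddCommGroup A] [Module K A]
    [FiniteDimensional K A] [Nontrivial A]
    (star bull : A →ₗ[K] A →ₗ[K] A)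
    (hstar : ∀ x y : A, x ≠ 0 → y ≠ 0 → star x y ≠ 0)
    (hbull : ∀ x y : A, x ≠ 0 → y ≠ 0 → bull x y ≠ 0)
    (q : QuadraticForm K A)
    (hq : ∀ x y : A, star x (bull x y) = q x • y)
    (hnd : ∀ x : A, (∀ y : A, QuadraticMap.polar ⇑q x y = 0) → x = 0) :
    Module.finrank K A = 1 ∨ Module.finrank K A = 2 ∨
    Module.finrank K A = 4 ∨ Module.finrank K A = 8 :=
  stmt_10_general star bull q hq (BilinForm.Nondegenerate.ofSeparatingLeft hnd)
end

section
/- Let q be a non-degenerate quadratic form over a field K of characteristic not 2 that is the quadratic form attached to a 4-dimensional LDB division algebra whose attached form represents 1. Then q is a 2-fold Pfister form: q ≃ ⟨1, −a⟩ ⊗ ⟨1, −b⟩ for some a, b ∈ K*. -/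
/-!
Since `x ⋆ (x • y) = q(x) y`, the operators `R x = x ⋆ (e • ·)` satisfy `R e = 1` and
`(R x)² = B(x, e) R x - q(x)`, where `B` is the polar form of `q`, and `x ↦ R x v` is bijective
for `v ≠ 0`. Take nonzero `j`, `k` with `e`, `j`, `k` orthogonal and define `x` by
`R j (R k v) = R x v`. Computing `(R j R k)² v = -q(j) q(k) v` by moving `R j R k` past `R x` gives
`B(x, e) x = (q(x) - q(j) q(k)) e + B(x, k) j - B(x, j) k`.
If `B(x, e)` were nonzero, `x` would lie in the span of `e`, `j`, `k`, and then inverting an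
operator of the form `R (s j + t e)` would put `k` in the span of `e` and `j`. Hence `B(x, e) = 0`,
so `x` is orthogonal to `e`, `j`, `k` and `q(x) = q(j) q(k)`: in the orthogonal basis
`e`, `j`, `k`, `x` the form is `⟨1, q(j), q(k), q(j) q(k)⟩`.
-/

open QuadraticMap

section Orthogonality

section CommRing

variable {K A : Type*} [CommRing K] [AddCommGroup A] [Module K A] {q : QuadraticForm K A}

lemma polar_self_ne_zero_of_anisotropic [NoZeroDivisors K] [NeZero (2 : K)]
    (hq : q.Anisotropic) {x : A} (hx : x ≠ 0) : polar q x x ≠ 0 := by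
  rw [polar_self, nsmul_eq_mul]
  exact mul_ne_zero two_ne_zero fun h => hx (hq x h)

lemma polar_eq_zero_of_mem_span_pair {x y z u : A} (hx : polar q x z = 0)
    (hy : polar q y z = 0) (hu : u ∈ Submodule.span K {x, y}) : polar q u z = 0 := by
  obtain ⟨a, b, rfl⟩ := Submodule.mem_span_pair.mp hu
  simp [hx, hy]

end CommRing

section Field

variable {K A : Type*} [Field K] [AddCommGroup A] [Module K A] {q : QuadraticForm K A}

lemma exists_ne_zero_forall_polar_eq_zero [FiniteDimensional K A] {ι : Type*} [Fintype ι]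
    (s : ι → A) (hs : Fintype.card ι < Module.finrank K A) :
    ∃ x, x ≠ 0 ∧ ∀ i, polar q x (s i) = 0 := by
  have hker := LinearMap.ker_ne_bot_of_finrank_lt
    (f := LinearMap.pi fun i => q.polarBilin.flip (s i)) (by simpa using hs)
  obtain ⟨x, hx, hx0⟩ := (Submodule.ne_bot_iff _).mp hker
  exact ⟨x, hx0, fun i => congrFun hx i⟩

lemma equivalent_weightedSumSquares_of_pairwise_polar_eq_zero [FiniteDimensional K A]
    [NeZero (2 : K)] {n : ℕ} (hA : Module.finrank K A = n) {v : Fin n → A}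
    (hv : Pairwise fun i j => polar q (v i) (v j) = 0) (hqv : ∀ i, q (v i) ≠ 0) :
    Equivalent q (weightedSumSquares K fun i => q (v i)) := by
  subst hA
  let := invertibleOfNonzero (two_ne_zero' K)
  have hortho : (associated (R := K) q).IsOrthoᵢ v := fun i j hij =>
    associated_isOrtho.mpr (isOrtho_polarBilin.mp (hv hij))
  have hindep : LinearIndependent K v := LinearMap.linearIndependent_of_isOrthoᵢ hortho fun i => by
    simpa only [associated_eq_self_apply] using hqv i
  let b := basisOfLinearIndependentOfCardEqFinrank' v hindep (Fintype.card_fin _)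
  have hb : ⇑b = v := coe_basisOfLinearIndependentOfCardEqFinrank' v hindep _
  rw [← hb] at hortho ⊢
  exact ⟨QuadraticForm.isometryEquivWeightedSumSquares q b hortho⟩

end Field

end Orthogonality

/-- `R` represents the pointed quadratic form `(q, e)` in the algebra `B`: it sends `e` to `1` and
each `R x` is a root of `t² - B(x, e) t + q x`, with `B` the polar form of `q`. Such maps are
the representations of the Clifford algebra of a quadratic form with base point. The base point
condition `q e = 1` is not a field: it is `sq` at `e` when `K` acts faithfully on `B`. -/
structure IsPointedRep {K A B : Type*} [CommRing K] [AddCommGroup A] [Module K A] [Ring B]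
    [Algebra K B] (q : QuadraticForm K A) (e : A) (R : A →ₗ[K] B) : Prop where
  map_base : R e = 1
  sq : ∀ x, R x * R x = polar q x e • R x - q x • 1

namespace IsPointedRep

section Algebra

variable {K A B : Type*} [CommRing K] [AddCommGroup A] [Module K A] [Ring B] [Algebra K B]
  {q : QuadraticForm K A} {e : A} {R : A →ₗ[K] B}

lemma apply_base_eq_one [FaithfulSMul K B] (hR : IsPointedRep q e R) : q e = 1 := by
  have hsq := hR.sq e
  rw [hR.map_base, polar_self, mul_one] at hsq
  apply FaithfulSMul.algebraMap_injective K B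
  rw [Algebra.algebraMap_eq_smul_one, map_one]
  linear_combination (norm := module) -hsq

lemma conj_mul (hR : IsPointedRep q e R) (x : A) :
    R (polar q x e • e - x) * R x = q x • 1 := by
  simp only [map_sub, map_smul, hR.map_base, sub_mul, smul_mul_assoc, one_mul, hR.sq]
  module

lemma mul_add_mul_swap (hR : IsPointedRep q e R) (x y : A) :
    R x * R y + R y * R x = polar q x e • R y + polar q y e • R x - polar q x y • 1 := by
  have hsq := hR.sq (x + y)
  rw [map_add, add_mul, mul_add, mul_add, hR.sq, hR.sq, polar_add_left,
    QuadraticMap.map_add q] at hsq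
  linear_combination (norm := module) hsq

lemma mul_self_of_polar_eq_zero (hR : IsPointedRep q e R) {x : A} (hx : polar q x e = 0) :
    R x * R x = -(q x • 1) := by
  rw [hR.sq, hx, zero_smul, zero_sub]

lemma exists_mul_eq_of_mem_span_pair (hR : IsPointedRep q e R) {x y z : A}
    (hy : y ∈ Submodule.span K {e, x}) (hz : z ∈ Submodule.span K {e, x}) :
    ∃ u ∈ Submodule.span K {e, x}, R y * R z = R u := by
  obtain ⟨a, b, rfl⟩ := Submodule.mem_span_pair.mp hy
  obtain ⟨c, d, rfl⟩ := Submodule.mem_span_pair.mp hz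
  refine ⟨(a * c - b * d * q x) • e + (a * d + b * c + b * d * polar q x e) • x,
    Submodule.mem_span_pair.mpr ⟨_, _, rfl⟩, ?_⟩
  simp only [map_add, map_smul, hR.map_base, add_mul, mul_add, smul_mul_smul_comm, one_mul,
    mul_one, hR.sq]
  module

variable {j k : A}

lemma mul_mul_self (hR : IsPointedRep q e R) (hj : polar q j e = 0) (hk : polar q k e = 0)
    (hjk : polar q j k = 0) : R j * R k * (R j * R k) = -((q j * q k) • 1) := by
  have hswap : R k * R j = -(R j * R k) := by
    simpa [hj, hk, hjk, add_eq_zero_iff_eq_neg'] using hR.mul_add_mul_swap j k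
  calc R j * R k * (R j * R k) = R j * (R k * R j) * R k := by noncomm_ring
    _ = -((R j * R j) * (R k * R k)) := by rw [hswap]; noncomm_ring
    _ = -((q j * q k) • 1) := by
      rw [hR.mul_self_of_polar_eq_zero hj, hR.mul_self_of_polar_eq_zero hk, neg_mul_neg,
        smul_mul_smul_comm, one_mul]

lemma mul_mul_comm (hR : IsPointedRep q e R) (hj : polar q j e = 0) (hk : polar q k e = 0)
    (x : A) :
    R j * R k * R x = R x * (R j * R k) + polar q x j • R k - polar q x k • R j := by
  have hswap_j := hR.mul_add_mul_swap x j
  have hswap_k := hR.mul_add_mul_swap x k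
  rw [hj, zero_smul, add_zero] at hswap_j
  rw [hk, zero_smul, add_zero] at hswap_k
  calc R j * R k * R x
      = R j * (R x * R k + R k * R x) - (R x * R j + R j * R x) * R k + R x * (R j * R k) := by
        noncomm_ring
    _ = R x * (R j * R k) + polar q x j • R k - polar q x k • R j := by
      rw [hswap_j, hswap_k]
      simp only [mul_sub, sub_mul, mul_smul_comm, smul_mul_assoc, mul_one, one_mul]
      module

end Algebra

section Module

variable {K A V : Type*} [Field K] [AddCommGroup A] [Module K A] [AddCommGroup V] [Module K V]
  {q : QuadraticForm K A} {e : A} {R : A →ₗ[K] Module.End K V} {v : V}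

lemma injective_flip_apply (hR : IsPointedRep q e R) (hq : q.Anisotropic) (hv : v ≠ 0) :
    Function.Injective (R.flip v) := by
  refine (injective_iff_map_eq_zero _).mpr fun x hx => hq x ?_
  have hconj := LinearMap.congr_fun (hR.conj_mul x) v
  rw [Module.End.mul_apply, ← R.flip_apply x v, hx, map_zero] at hconj
  exact (smul_eq_zero_iff_left hv).mp hconj.symm

lemma surjective_flip_apply [FiniteDimensional K A] [FiniteDimensional K V]
    (hR : IsPointedRep q e R) (hq : q.Anisotropic) (hAV : Module.finrank K A = Module.finrank K V)
    (hv : v ≠ 0) : Function.Surjective (R.flip v) :=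
  (LinearMap.injective_iff_surjective_of_finrank_eq_finrank hAV).mp
    (hR.injective_flip_apply hq hv)

variable {j k x : A}

lemma polar_smul_eq_of_apply_apply_eq (hR : IsPointedRep q e R) (hq : q.Anisotropic)
    (hv : v ≠ 0) (hj : polar q j e = 0) (hk : polar q k e = 0) (hjk : polar q j k = 0)
    (hx : R j (R k v) = R x v) :
    polar q x e • x = (q x - q j * q k) • e + polar q x k • j - polar q x j • k := by
  have hsquare : R j (R k (R x v)) = -((q j * q k) • v) := by
    rw [← hx]
    exact LinearMap.congr_fun (hR.mul_mul_self hj hk hjk) v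
  have hcomm : R j (R k (R x v)) =
      R x (R x v) + polar q x j • R k v - polar q x k • R j v := by
    simpa [hx] using LinearMap.congr_fun (hR.mul_mul_comm hj hk x) v
  have hroot : R x (R x v) = polar q x e • R x v - q x • v := LinearMap.congr_fun (hR.sq x) v
  apply hR.injective_flip_apply hq hv
  simp only [map_sub, map_add, map_smul, LinearMap.flip_apply, hR.map_base, Module.End.one_apply]
  linear_combination (norm := module) hsquare - hcomm - hroot

variable [NeZero (2 : K)]

lemma eq_zero_of_apply_apply_eq (hR : IsPointedRep q e R) (hq : q.Anisotropic) (hv : v ≠ 0)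
    (hk0 : k ≠ 0) (hk : polar q k e = 0) (hjk : polar q j k = 0) {y z : A}
    (hy : y ∈ Submodule.span K {e, j}) (hz : z ∈ Submodule.span K {e, j})
    (hyz : R y (R k v) = R z v) : y = 0 := by
  have hconj : polar q y e • e - y ∈ Submodule.span K {e, j} :=
    sub_mem (Submodule.smul_mem _ _ (Submodule.subset_span (Set.mem_insert _ _))) hy
  obtain ⟨u, hu, hmul⟩ := hR.exists_mul_eq_of_mem_span_pair hconj hz
  have hku : q y • k = u := hR.injective_flip_apply hq hv <|
    calc R (q y • k) v = (R (polar q y e • e - y) * R y) (R k v) := by rw [hR.conj_mul]; simp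
      _ = R u v := by rw [Module.End.mul_apply, hyz, ← hmul, Module.End.mul_apply]
  have hpolar := polar_eq_zero_of_mem_span_pair ((polar_comm q e k).trans hk) hjk hu
  rw [← hku, polar_smul_left] at hpolar
  exact hq y ((smul_eq_zero_iff_left (polar_self_ne_zero_of_anisotropic hq hk0)).mp hpolar)

lemma polar_base_eq_zero_of_apply_apply_eq (hR : IsPointedRep q e R) (hq : q.Anisotropic)
    (hv : v ≠ 0) (hj0 : j ≠ 0) (hk0 : k ≠ 0) (hj : polar q j e = 0) (hk : polar q k e = 0)
    (hjk : polar q j k = 0) (hx : R j (R k v) = R x v) : polar q x e = 0 := by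
  have hrel := congrArg (R · v) (hR.polar_smul_eq_of_apply_apply_eq hq hv hj hk hjk hx)
  have hline : polar q x j • e + polar q x e • j = 0 := by
    refine hR.eq_zero_of_apply_apply_eq hq hv hk0 hk hjk (Submodule.mem_span_pair.mpr ⟨_, _, rfl⟩)
      (Submodule.mem_span_pair.mpr ⟨q x - q j * q k, polar q x k, rfl⟩) ?_
    simp only [map_add, map_sub, map_smul, LinearMap.add_apply, LinearMap.sub_apply,
      LinearMap.smul_apply, hR.map_base, Module.End.one_apply, hx] at hrel ⊢
    linear_combination (norm := module) hrel
  have hpair := congrArg (polar q · j) hline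
  simp only [polar_add_left, polar_smul_left, polar_comm q e j, hj, smul_zero, zero_add,
    polar_zero_left] at hpair
  exact (smul_eq_zero_iff_left (polar_self_ne_zero_of_anisotropic hq hj0)).mp hpair

lemma orthogonal_and_apply_eq_mul_of_apply_apply_eq (hR : IsPointedRep q e R)
    (hq : q.Anisotropic) (hv : v ≠ 0) (hj0 : j ≠ 0) (hk0 : k ≠ 0) (hj : polar q j e = 0)
    (hk : polar q k e = 0) (hjk : polar q j k = 0) (hx : R j (R k v) = R x v) :
    polar q x e = 0 ∧ polar q x j = 0 ∧ polar q x k = 0 ∧ q x = q j * q k := by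
  have hxe := hR.polar_base_eq_zero_of_apply_apply_eq hq hv hj0 hk0 hj hk hjk hx
  have hrel := hR.polar_smul_eq_of_apply_apply_eq hq hv hj hk hjk hx
  rw [hxe, zero_smul] at hrel
  have hpair (y : A) : (q x - q j * q k) * polar q e y + polar q x k * polar q j y
      - polar q x j * polar q k y = 0 := by
    simpa using (congrArg (polar q · y) hrel).symm
  have hxj : polar q x j = 0 := by
    simpa [-polar_self, polar_comm q e k, hk, hjk,
      polar_self_ne_zero_of_anisotropic hq hk0] using hpair k
  have hxk : polar q x k = 0 := by
    simpa [-polar_self, polar_comm q e j, polar_comm q k j, hj, hjk,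
      polar_self_ne_zero_of_anisotropic hq hj0] using hpair j
  have he0 : e ≠ 0 := by
    rintro rfl
    exact hv (by simpa using (LinearMap.congr_fun hR.map_base v).symm)
  have hqx : q x - q j * q k = 0 := by
    simpa [-polar_self, hj, hk, polar_self_ne_zero_of_anisotropic hq he0] using hpair e
  exact ⟨hxe, hxj, hxk, sub_eq_zero.mp hqx⟩

theorem exists_orthogonal_triple_apply_eq_mul [FiniteDimensional K A] [FiniteDimensional K V]
    [Nontrivial V] (hR : IsPointedRep q e R) (hq : q.Anisotropic) (hA : 2 < Module.finrank K A)
    (hAV : Module.finrank K A = Module.finrank K V) :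
    ∃ j k x, j ≠ 0 ∧ k ≠ 0 ∧ polar q j e = 0 ∧ polar q k e = 0 ∧ polar q k j = 0 ∧
      polar q x e = 0 ∧ polar q x j = 0 ∧ polar q x k = 0 ∧ q x = q j * q k := by
  obtain ⟨j, hj0, hj⟩ := exists_ne_zero_forall_polar_eq_zero (q := q) ![e]
    (by rw [Fintype.card_fin]; lia)
  obtain ⟨k, hk0, hk⟩ := exists_ne_zero_forall_polar_eq_zero (q := q) ![e, j] (by simpa using hA)
  simp only [Fin.forall_fin_one, Fin.forall_fin_two, Matrix.cons_val_zero,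
    Matrix.cons_val_one] at hj hk
  obtain ⟨v, hv⟩ := exists_ne (0 : V)
  obtain ⟨x, hx⟩ := hR.surjective_flip_apply hq hAV hv (R j (R k v))
  exact ⟨j, k, x, hj0, hk0, hj, hk.1, hk.2, hR.orthogonal_and_apply_eq_mul_of_apply_apply_eq hq hv
    hj0 hk0 hj hk.1 ((polar_comm q j k).trans hk.2) hx.symm⟩

theorem exists_equivalent_pfister (hR : IsPointedRep q e R) (hq : q.Anisotropic)
    (hA : Module.finrank K A = 4) (hV : Module.finrank K V = 4) :
    ∃ a b : K, a ≠ 0 ∧ b ≠ 0 ∧ Equivalent q (weightedSumSquares K ![1, -a, -b, a * b]) := by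
  have : FiniteDimensional K A := .of_finrank_pos (by lia)
  have : FiniteDimensional K V := .of_finrank_pos (by lia)
  have : Nontrivial V := Module.nontrivial_of_finrank_pos (R := K) (by lia)
  obtain ⟨j, k, x, hj0, hk0, hje, hke, hkj, hxe, hxj, hxk, hqx⟩ :=
    hR.exists_orthogonal_triple_apply_eq_mul hq (by lia) (hA.trans hV.symm)
  have hqj : q j ≠ 0 := fun h => hj0 (hq j h)
  have hqk : q k ≠ 0 := fun h => hk0 (hq k h)
  have hqe : q e = 1 := hR.apply_base_eq_one
  have hortho : Pairwise fun m n => polar q (![e, j, k, x] m) (![e, j, k, x] n) = 0 := by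
    intro m n hmn
    fin_cases m <;> fin_cases n <;>
      simp_all [polar_comm q e, polar_comm q j k, polar_comm q j x, polar_comm q k x]
  have hdiag : (fun n => q (![e, j, k, x] n)) = ![1, - -q j, - -q k, -q j * -q k] := by
    ext n
    fin_cases n <;> simp [hqe, hqx]
  refine ⟨-q j, -q k, neg_ne_zero.mpr hqj, neg_ne_zero.mpr hqk, ?_⟩
  rw [← hdiag]
  refine equivalent_weightedSumSquares_of_pairwise_polar_eq_zero hA hortho fun n => ?_
  fin_cases n <;> simp [hqe, hqx, hqj, hqk]

end Module

end IsPointedRep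

section LDB

variable {K A : Type*} [CommRing K] [AddCommGroup A] [Module K A]
  {star bull : A →ₗ[K] A →ₗ[K] A} {q : QuadraticForm K A}

lemma anisotropic_of_regular [Nontrivial A] (hstar : ∀ x y, x ≠ 0 → y ≠ 0 → star x y ≠ 0)
    (hbull : ∀ x y, x ≠ 0 → y ≠ 0 → bull x y ≠ 0) (hq : ∀ x y, star x (bull x y) = q x • y) :
    q.Anisotropic := by
  intro x hx
  by_contra hx0
  obtain ⟨y, hy⟩ := exists_ne (0 : A)
  exact hstar x _ hx0 (hbull x y hx0 hy) (by rw [hq, hx, zero_smul])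

lemma star_bull_add_star_bull_swap (hq : ∀ x y, star x (bull x y) = q x • y) (x y z : A) :
    star x (bull y z) + star y (bull x z) = polar q x y • z := by
  have hxy := hq (x + y) z
  simp only [map_add, LinearMap.add_apply, hq, QuadraticMap.map_add q] at hxy
  linear_combination (norm := module) hxy

lemma bull_star_of_apply_eq_one [Module.Finite K A]
    (hq : ∀ x y, star x (bull x y) = q x • y) {e : A} (he : q e = 1) (y : A) :
    bull e (star e y) = y := by
  have hright (z : A) : star e (bull e z) = z := by rw [hq, he, one_smul]
  have hsurj : Function.Surjective (star e) := fun z => ⟨bull e z, hright z⟩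
  exact OrzechProperty.injective_of_surjective_endomorphism _ hsurj (hright (star e y))

/-- The family of operators `x ↦ (y ↦ x ⋆ (e • y))`, i.e. left multiplications in the isotope of
`⋆` for which `e` is a left unit when `q e = 1`. -/
def leftUnitalIsotope (star bull : A →ₗ[K] A →ₗ[K] A) (e : A) : A →ₗ[K] Module.End K A :=
  star.compl₂ (bull e)

lemma isPointedRep_leftUnitalIsotope [Module.Finite K A]
    (hq : ∀ x y, star x (bull x y) = q x • y) {e : A} (he : q e = 1) :
    IsPointedRep q e (leftUnitalIsotope star bull e) where
  map_base := LinearMap.ext fun y => by simp [leftUnitalIsotope, hq, he]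
  sq x := LinearMap.ext fun y => by
    have hswap : star x (bull e y) = polar q x e • y - star e (bull x y) :=
      eq_sub_of_add_eq (star_bull_add_star_bull_swap hq x e y)
    calc star x (bull e (star x (bull e y)))
        = star x (bull e (polar q x e • y - star e (bull x y))) := by rw [hswap]
      _ = polar q x e • star x (bull e y) - q x • y := by
        rw [map_sub, map_sub, map_smul, map_smul, bull_star_of_apply_eq_one hq he, hq]

end LDB

theorem stmt_17 (K A : Type*) [Field K] [AddCommGroup A] [Module K A]
    [FiniteDimensional K A] [Nontrivial A]
    (hchar : (2 : K) ≠ 0)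
    (star bull : A →ₗ[K] A →ₗ[K] A)
    (hstar : ∀ x y : A, x ≠ 0 → y ≠ 0 → star x y ≠ 0)
    (hbull : ∀ x y : A, x ≠ 0 → y ≠ 0 → bull x y ≠ 0)
    (q : QuadraticForm K A)
    (hq : ∀ x y : A, star x (bull x y) = q x • y)
    (hnd : ∀ x : A, (∀ y : A, QuadraticMap.polar ⇑q x y = 0) → x = 0)
    (hdim : Module.finrank K A = 4)
    (hrep : ∃ e : A, q e = 1) :
    ∃ a b : K, a ≠ 0 ∧ b ≠ 0 ∧
      QuadraticMap.Equivalent q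
        (QuadraticMap.weightedSumSquares K ![1, -a, -b, a * b]) := by
  obtain ⟨e, he⟩ := hrep
  have : NeZero (2 : K) := ⟨hchar⟩
  have hR := isPointedRep_leftUnitalIsotope hq he
  exact hR.exists_equivalent_pfister (anisotropic_of_regular hstar hbull hq) hdim hdim
end
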